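/- Fix ε ∈ (0, 1), δ ∈ (0, 1), Δ > 0, k ∈ ℕ, and a constant c > 0 with c² > 2 · ln(1.25/δ), and let σ ≥ c·Δ/ε. For a : Fin k → ℝ let μ_a denote the product measure on Fin k → ℝ whose i-th factor is the real Gaussian measure with mean a_i and variance σ². Then for all a, a' : Fin k → ℝ with √(∑_i (a_i − a'_i)²) ≤ Δ and every measurable set S ⊆ (Fin k → ℝ): μ_a(S) ≤ exp(ε) · μ_{a'}(S) + δ. -/

import Mathlib

open MeasureTheory ProbabilityTheory

/-- The Gaussian mechanism output distribution with center `a`: the product measure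
whose `i`-th factor is the real Gaussian measure with mean `a_i` and variance `σ²`. -/
noncomputable def gaussianMechanism (k : ℕ) (σ : ℝ) (a : Fin k → ℝ) :
    Measure (Fin k → ℝ) :=
  Measure.pi fun i => gaussianReal (a i) (⟨σ ^ 2, sq_nonneg σ⟩ : NNReal)

lemma gm_density (a a' : ℝ) (v : NNReal) (hv : v ≠ 0) :
    gaussianReal a v = (gaussianReal a' v).withDensity
      (fun x => ENNReal.ofReal (Real.exp (((x - a') ^ 2 - (x - a) ^ 2) / (2 * v)))) := by
  rw [gaussianReal_of_var_ne_zero _ hv, gaussianReal_of_var_ne_zero _ hv,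
    ← withDensity_mul _ (measurable_gaussianPDF _ _) (by fun_prop)]
  congr 1
  ext x
  simp only [Pi.mul_apply, gaussianPDF]
  rw [← ENNReal.ofReal_mul (gaussianPDFReal_nonneg _ _ _)]
  congr 1
  simp only [gaussianPDFReal]
  rw [mul_assoc (Real.sqrt _)⁻¹, ← Real.exp_add]
  congr 2
  ring

lemma gm_pi_density (k : ℕ) (a a' : Fin k → ℝ) (v : NNReal) (hv : v ≠ 0) :
    Measure.pi (fun i => gaussianReal (a i) v) =
      (Measure.pi (fun i => gaussianReal (a' i) v)).withDensity
      (fun x => ENNReal.ofReal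
        (Real.exp (∑ i, ((x i - a' i) ^ 2 - (x i - a i) ^ 2) / (2 * v)))) := by
  apply Measure.pi_eq
  intro s hs
  rw [withDensity_apply _ (MeasurableSet.univ_pi hs),
    ← lintegral_indicator (MeasurableSet.univ_pi hs)]
  set g : Fin k → ℝ → ENNReal := fun i => (s i).indicator
    (fun x => ENNReal.ofReal (Real.exp (((x - a' i) ^ 2 - (x - a i) ^ 2) / (2 * v)))) with hg
  have hgm : ∀ i, Measurable (g i) := fun i => Measurable.indicator (by fun_prop) (hs i)
  have h1 : ∀ x : Fin k → ℝ, (Set.univ.pi s).indicator (fun x => ENNReal.ofReal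
        (Real.exp (∑ i, ((x i - a' i) ^ 2 - (x i - a i) ^ 2) / (2 * v)))) x
      = ∏ i, g i (x i) := by
    intro x
    by_cases hx : x ∈ Set.univ.pi s
    · rw [Set.indicator_of_mem hx, Real.exp_sum,
        ENNReal.ofReal_prod_of_nonneg (fun i _ => (Real.exp_pos _).le)]
      refine Finset.prod_congr rfl fun i _ => ?_
      rw [hg]
      simp only
      rw [Set.indicator_of_mem (hx i trivial)]
    · rw [Set.indicator_of_notMem hx]
      simp only [Set.mem_pi, Set.mem_univ, true_implies, not_forall] at hx
      obtain ⟨i, hi⟩ := hx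
      symm
      apply Finset.prod_eq_zero (Finset.mem_univ i)
      rw [hg]
      simp only
      rw [Set.indicator_of_notMem hi]
  simp_rw [h1]
  have h2 := lintegral_prod_eq_prod_lintegral_of_indepFun Finset.univ
    (fun (i : Fin k) (x : Fin k → ℝ) => g i (x i))
    (iIndepFun_pi (μ := fun i => gaussianReal (a' i) v) (X := g)
      (fun i => (hgm i).aemeasurable))
    (fun i => (hgm i).comp (measurable_pi_apply i))
  rw [h2]
  refine Finset.prod_congr rfl fun i _ => ?_
  have hmp := measurePreserving_eval (fun i => gaussianReal (a' i) v) i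
  have h3 := hmp.lintegral_comp (hgm i)
  simp only [Function.eval] at h3
  rw [h3, gm_density (a i) (a' i) v hv, withDensity_apply _ (hs i), ← lintegral_indicator (hs i)]

lemma gm_linear_law (k : ℕ) (a d : Fin k → ℝ) (v w : NNReal) (hw : (w : ℝ) = v * ∑ i, d i ^ 2) :
    (Measure.pi (fun i => gaussianReal (a i) v)).map (fun x => ∑ i, d i * x i) =
      gaussianReal (∑ i, d i * a i) w := by
  apply Measure.ext_of_charFun
  have hI := (iIndepFun_pi (μ := fun i => gaussianReal (a i) v) (X := fun i x => d i * x)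
      (fun i => by fun_prop))
  rw [hI.charFun_map_fun_sum_eq_prod
    (fun i => ((measurable_pi_apply i).const_mul (d i)).aemeasurable)]
  ext t
  rw [Finset.prod_apply, charFun_gaussianReal]
  have h1 : ∀ i, Measure.map (fun ω : Fin k → ℝ => d i * ω i)
      (Measure.pi (fun i => gaussianReal (a i) v)) =
      gaussianReal (d i * a i) (.mk (d i ^ 2) (sq_nonneg _) * v) := by
    intro i
    rw [← gaussianReal_map_const_mul,
      ← (measurePreserving_eval (fun i => gaussianReal (a i) v) i).map_eq,
      Measure.map_map (by fun_prop) (by fun_prop)]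
    rfl
  simp_rw [h1, charFun_gaussianReal]
  rw [← Complex.exp_sum]
  congr 1
  have hw' : (w : ℂ) = v * ∑ i, (d i : ℂ) ^ 2 := by exact_mod_cast congrArg Complex.ofReal hw
  rw [hw', Finset.sum_sub_distrib]
  push_cast
  rw [Finset.mul_sum, Finset.mul_sum, Finset.sum_mul, Finset.sum_mul, Finset.sum_div]
  congr 1
  refine Finset.sum_congr rfl fun i _ => ?_
  simp
  left
  ring

lemma gm_half : gaussianReal 0 1 (Set.Ioi 0) ≤ ENNReal.ofReal (1 / 2) := by
  have h1 : gaussianReal 0 1 (Set.Iio 0) = gaussianReal 0 1 (Set.Ioi 0) := by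
    have h := gaussianReal_map_neg (μ := 0) (v := 1)
    rw [neg_zero] at h
    conv_lhs => rw [← h]
    rw [Measure.map_apply (by fun_prop) measurableSet_Iio]
    congr 1
    ext x
    simp
  have h2 : gaussianReal 0 1 (Set.Iio 0) + gaussianReal 0 1 (Set.Ioi 0) ≤ 1 := by
    rw [← measure_union _ measurableSet_Ioi]
    · exact prob_le_one
    · rw [Set.disjoint_left]
      intro x hx hx'
      exact lt_asymm (Set.mem_Iio.1 hx) (Set.mem_Ioi.1 hx')
  rw [h1] at h2
  rw [← ENNReal.ofReal_toReal (measure_ne_top (gaussianReal 0 1) (Set.Ioi 0))] at h2 ⊢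
  rw [← ENNReal.ofReal_add (by positivity) (by positivity), ENNReal.ofReal_le_one] at h2
  apply ENNReal.ofReal_le_ofReal
  linarith

lemma gm_tail_pos (z : ℝ) (hz : 0 ≤ z) :
    gaussianReal 0 1 (Set.Ioi z) ≤ ENNReal.ofReal (Real.exp (-z ^ 2 / 2) * (1 / 2)) := by
  rw [gm_density 0 z 1 one_ne_zero, withDensity_apply _ measurableSet_Ioi]
  calc _ ≤ ∫⁻ x in Set.Ioi z, ENNReal.ofReal (Real.exp (-z ^ 2 / 2)) ∂(gaussianReal z 1) := by
        refine setLIntegral_mono (by fun_prop) fun x hx => ?_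
        apply ENNReal.ofReal_le_ofReal
        apply Real.exp_le_exp.2
        have : z < x := hx
        simp only [NNReal.coe_one]
        nlinarith
    _ = ENNReal.ofReal (Real.exp (-z ^ 2 / 2)) * gaussianReal z 1 (Set.Ioi z) := by
        rw [setLIntegral_const]
    _ = ENNReal.ofReal (Real.exp (-z ^ 2 / 2)) * gaussianReal 0 1 (Set.Ioi 0) := by
        have h := gaussianReal_map_add_const (μ := 0) (v := 1) z
        rw [zero_add] at h
        rw [← h, Measure.map_apply (by fun_prop) measurableSet_Ioi]
        congr 2
        ext x
        simp
    _ ≤ _ := by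
        rw [ENNReal.ofReal_mul (Real.exp_pos _).le]
        gcongr
        exact gm_half

lemma gm_tail_neg (z : ℝ) (hz : z ≤ 0) :
    gaussianReal 0 1 (Set.Ioi z) ≤ ENNReal.ofReal (1 / 2 - z) := by
  have h : Set.Ioi z = Set.Ioi 0 ∪ Set.Ioc z 0 := by
    rw [Set.union_comm, Set.Ioc_union_Ioi_eq_Ioi hz]
  rw [h, sub_eq_add_neg, ENNReal.ofReal_add (by norm_num) (by linarith)]
  refine (measure_union_le _ _).trans (add_le_add gm_half ?_)
  rw [gaussianReal_apply _ one_ne_zero]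
  calc _ ≤ ∫⁻ x in Set.Ioc z 0, 1 := by
        refine setLIntegral_mono (by fun_prop) fun x _ => ?_
        rw [gaussianPDF, ENNReal.ofReal_le_one, gaussianPDFReal]
        have h1 : (Real.sqrt (2 * Real.pi * (1 : NNReal)))⁻¹ ≤ 1 := by
          apply inv_le_one_of_one_le₀
          rw [Real.one_le_sqrt]
          have := Real.pi_gt_three
          simp only [NNReal.coe_one]
          linarith
        have h2 : Real.exp (-(x - 0) ^ 2 / (2 * (1 : NNReal))) ≤ 1 := by
          rw [Real.exp_le_one_iff]
          simp only [NNReal.coe_one]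
          nlinarith [sq_nonneg (x - 0)]
        exact mul_le_one₀ h1 (Real.exp_pos _).le h2
    _ = _ := by simp

lemma gm_tail (c δ : ℝ) (hc : 0 < c) (hδ : δ ∈ Set.Ioo (0 : ℝ) 1)
    (hc2 : c ^ 2 > 2 * Real.log (1.25 / δ)) :
    gaussianReal 0 1 (Set.Ioi (c - 1 / (2 * c))) ≤ ENNReal.ofReal δ := by
  obtain ⟨h0, h1⟩ := hδ
  have hδ1 : 1.25 * Real.exp (-c ^ 2 / 2) ≤ δ := by
    have h2 : 1.25 / δ ≤ Real.exp (c ^ 2 / 2) := by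
      rw [← Real.log_le_iff_le_exp (by positivity)]
      linarith
    rw [div_le_iff₀ h0] at h2
    have h3 : Real.exp (-c ^ 2 / 2) * Real.exp (c ^ 2 / 2) = 1 := by
      rw [← Real.exp_add, ← Real.exp_zero]
      congr 1
      ring
    nlinarith [Real.exp_pos (-c ^ 2 / 2)]
  have hcc : c * (1 / (2 * c)) = 1 / 2 := by field_simp
  have hp : 0 < 1 / (2 * c) := by positivity
  set u := 1 / (2 * c) with hu
  rcases le_total 0 (c - u) with hz | hz
  · refine (gm_tail_pos _ hz).trans (ENNReal.ofReal_le_ofReal (le_trans ?_ hδ1))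
    have h4 : Real.exp (-(c - u) ^ 2 / 2) ≤ Real.exp (-c ^ 2 / 2) * Real.exp (1 / 2) := by
      rw [← Real.exp_add]
      apply Real.exp_le_exp.2
      nlinarith [sq_nonneg u]
    have h5 : Real.exp (1 / 2) ≤ 2.5 := by
      have := Real.exp_one_lt_d9
      have h6 : Real.exp (1 / 2) ≤ Real.exp 1 := Real.exp_le_exp.2 (by norm_num)
      have h7 : Real.exp (1 / 2) * Real.exp (1 / 2) = Real.exp 1 := by
        rw [← Real.exp_add]; norm_num
      nlinarith
    nlinarith [Real.exp_pos (-c ^ 2 / 2)]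
  · refine (gm_tail_neg _ hz).trans (ENNReal.ofReal_le_ofReal (le_trans ?_ hδ1))
    have h4 : 0.4 < c ^ 2 := by
      have h5 : 1.25 ≤ 1.25 / δ := by
        rw [le_div_iff₀ h0]; linarith
      have h6 := Real.one_sub_inv_le_log_of_pos (x := 1.25 / δ) (by positivity)
      have h7 : (1.25 / δ)⁻¹ ≤ (1.25)⁻¹ := inv_anti₀ (by norm_num) h5
      norm_num at h7 h6 hc2 ⊢
      linarith
    have h8 : -c ^ 2 / 2 + 1 ≤ Real.exp (-c ^ 2 / 2) := Real.add_one_le_exp _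
    have h9 : c ^ 2 ≤ 1 / 2 := by nlinarith
    have h10 : 0.6 < c := by nlinarith
    have h11 : u ≤ 0.85 := by nlinarith
    nlinarith

/-- (ε, δ)-Differential Privacy Theorem for the Gaussian mechanism: with
`c² > 2 ln(1.25/δ)` and `σ ≥ cΔ/ε`, for any two centers at ℓ₂-distance at most `Δ`
and any measurable set `S`, `μ_a(S) ≤ e^ε · μ_{a'}(S) + δ`. -/
theorem gaussian_mechanism_differential_privacy (ε δ Δ c σ : ℝ)
    (hε : ε ∈ Set.Ioo (0 : ℝ) 1) (hδ : δ ∈ Set.Ioo (0 : ℝ) 1) (hΔ : 0 < Δ)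
    (hc : 0 < c) (hc2 : c ^ 2 > 2 * Real.log (1.25 / δ)) (hσ : σ ≥ c * Δ / ε)
    (k : ℕ) (a a' : Fin k → ℝ)
    (hdist : Real.sqrt (∑ i, (a i - a' i) ^ 2) ≤ Δ)
    (S : Set (Fin k → ℝ)) (hS : MeasurableSet S) :
    gaussianMechanism k σ a S ≤
      ENNReal.ofReal (Real.exp ε) * gaussianMechanism k σ a' S + ENNReal.ofReal δ := by
  obtain ⟨hε0, hε1⟩ := hε
  have hσ0 : 0 < σ := lt_of_lt_of_le (by positivity) hσ
  have hexp : (1 : ENNReal) ≤ ENNReal.ofReal (Real.exp ε) := by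
    rw [ENNReal.one_le_ofReal]
    exact Real.one_le_exp hε0.le
  unfold gaussianMechanism
  set v : NNReal := ⟨σ ^ 2, sq_nonneg σ⟩ with hvdef
  have hvr : (v : ℝ) = σ ^ 2 := rfl
  have hv : v ≠ 0 := by
    intro h
    have h' : (v : ℝ) = 0 := by rw [h]; rfl
    rw [hvr] at h'
    exact (pow_pos hσ0 2).ne' h'
  set D := Real.sqrt (∑ i, (a i - a' i) ^ 2) with hD
  have hsum0 : 0 ≤ ∑ i, (a i - a' i) ^ 2 := Finset.sum_nonneg fun i _ => sq_nonneg _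
  have hDsq : D ^ 2 = ∑ i, (a i - a' i) ^ 2 := Real.sq_sqrt hsum0
  have hD0 : 0 ≤ D := Real.sqrt_nonneg _
  rcases hD0.eq_or_lt with hDz | hDpos
  · have haa : a = a' := by
      rw [← hDz] at hDsq
      have h := (Finset.sum_eq_zero_iff_of_nonneg (fun i _ => sq_nonneg (a i - a' i))).1
        (by rw [← hDsq]; norm_num)
      ext i
      have := h i (Finset.mem_univ i)
      have := pow_eq_zero_iff (two_ne_zero) |>.1 this
      linarith
    rw [haa]
    refine le_trans ?_ le_self_add
    exact le_mul_of_one_le_left zero_le hexp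
  set L : (Fin k → ℝ) → ℝ := fun x => ∑ i, ((x i - a' i) ^ 2 - (x i - a i) ^ 2) / (2 * v) with hL
  have hLm : Measurable L := by fun_prop
  set B : Set (Fin k → ℝ) := {x | ε < L x} with hB
  have hBm : MeasurableSet B := measurableSet_lt measurable_const hLm
  set μ := Measure.pi (fun i => gaussianReal (a i) v) with hμ
  set ν := Measure.pi (fun i => gaussianReal (a' i) v) with hν
  have hdens : μ = ν.withDensity (fun x => ENNReal.ofReal (Real.exp (L x))) :=
    gm_pi_density k a a' v hv
  have hgood : μ (S \ B) ≤ ENNReal.ofReal (Real.exp ε) * ν S := by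
    rw [hdens, withDensity_apply _ (hS.diff hBm)]
    calc _ ≤ ∫⁻ x in S \ B, ENNReal.ofReal (Real.exp ε) ∂ν := by
          refine setLIntegral_mono (by fun_prop) fun x hx => ?_
          exact ENNReal.ofReal_le_ofReal (Real.exp_le_exp.2 (not_lt.1 hx.2))
      _ = ENNReal.ofReal (Real.exp ε) * ν (S \ B) := setLIntegral_const _ _
      _ ≤ _ := by
          gcongr
          exact Set.sdiff_subset
  have hbad : μ B ≤ ENNReal.ofReal δ := by
    refine le_trans ?_ (gm_tail c δ hc hδ hc2)
    -- the privacy loss, normalized, is standard Gaussian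
    set d : Fin k → ℝ := fun i => (a i - a' i) / (σ * D) with hd
    have hlaw := gm_linear_law k a d v 1 (by
      rw [hvr, hd]
      simp only [div_pow]
      rw [← Finset.sum_div, ← hDsq, NNReal.coe_one]
      field_simp)
    set m := ∑ i, d i * a i with hm
    have h0 : gaussianReal 0 1 = μ.map (fun x => (∑ i, d i * x i) - m) := by
      have h := gaussianReal_map_sub_const (μ := m) (v := 1) m
      rw [sub_self] at h
      rw [← h, ← hlaw, Measure.map_map (by fun_prop) (by fun_prop)]
      rfl
    rw [h0, Measure.map_apply (by fun_prop) measurableSet_Ioi]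
    apply measure_mono
    intro x hx
    have hx' : ε < L x := hx
    have hLx : L x = D / σ * ((∑ i, d i * x i) - m) + D ^ 2 / (2 * σ ^ 2) := by
      rw [hDsq, hm, ← Finset.sum_sub_distrib, Finset.mul_sum, Finset.sum_div,
        ← Finset.sum_add_distrib]
      refine Finset.sum_congr rfl fun i _ => ?_
      rw [hvr, hd]
      field_simp
      ring
    rw [hLx] at hx'
    change c - 1 / (2 * c) < (∑ i, d i * x i) - m
    set y := (∑ i, d i * x i) - m with hy
    have ht0 : 0 < D / σ := by positivity
    have h2 : D ^ 2 / (2 * σ ^ 2) = (D / σ) ^ 2 / 2 := by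
      field_simp
    have hct : c * (D / σ) ≤ ε := by
      rw [ge_iff_le, div_le_iff₀ hε0] at hσ
      rw [← mul_div_assoc, div_le_iff₀ hσ0]
      nlinarith
    rw [h2] at hx'
    set t := D / σ with ht
    have ht1 : t ≤ 1 / c := by
      rw [le_div_iff₀ hc]
      linarith
    have h3 : c < y + t / 2 := by
      by_contra hcon
      push Not at hcon
      nlinarith
    have h4 : 1 / (2 * c) = 1 / c / 2 := by field_simp
    rw [h4]
    linarith
  calc μ S ≤ μ ((S \ B) ∪ B) := by
        apply measure_mono
        intro x hx
        by_cases h : x ∈ B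
        · exact Or.inr h
        · exact Or.inl ⟨hx, h⟩
    _ ≤ μ (S \ B) + μ B := measure_union_le _ _
    _ ≤ _ := add_le_add hgood hbad
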